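/- For every prime p ≥ 5 and every positive integer m with p ∤ m, Σ over (i,j,k) with i+j+k = m·p and p ∤ ijk of 1/(ijk) ≡ -2m·B_{p-3} (mod p). -/

import Mathlib

open Finset

/-!
Terms of a sum of products of inverses in `ZMod p` that involve a multiple of `p` vanish, because
`0⁻¹ = 0`. Modulo `p` the sum is therefore `∑ i⁻¹ j⁻¹ k⁻¹` over all `i + j + k = m p`, and
`k = -(i + j)` turns it into `-∑ n⁻¹ c(n)` over `n < m p`, where `c(n) = ∑ i⁻¹ j⁻¹` over
`i + j = n`. Each of the `m` blocks of `p` consecutive `n` contributes the same amount: `c(b p + r)`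
and `c(r)` differ by `b` times an odd function of `r`. On the first block
`n * c(n) = 2 * ∑_{i < n} i⁻¹`, so a block contributes `2 * ∑ n⁻² ∑_{i < n} i⁻¹`. By Fermat
`i⁻¹ = i ^ (p - 2)`, so Faulhaber's formula makes the inner sum a polynomial in `n` with Bernoulli
coefficients, and summing over `n` selects the coefficient `B_{p-3}` of `n²`.
-/

lemma natCast_factorial_ne_zero_of_le {R : Type*} [Semiring R] {k n : ℕ} (hkn : k ≤ n)
    (hn : (n.factorial : R) ≠ 0) :
    (k.factorial : R) ≠ 0 :=
  ne_zero_of_dvd_ne_zero hn (Nat.cast_dvd_cast (Nat.factorial_dvd_factorial hkn))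

lemma natCast_succ_ne_zero_of_factorial {R : Type*} [Semiring R] {n : ℕ}
    (hn : ((n + 1).factorial : R) ≠ 0) : ((n + 1 : ℕ) : R) ≠ 0 :=
  ne_zero_of_dvd_ne_zero hn (Nat.cast_dvd_cast (Nat.dvd_factorial n.succ_pos le_rfl))

section RatCast

/-- The rationals with denominator nonzero in `K`: on this subring the cast `ℚ → K` is additive and
multiplicative. For `K = ZMod p` it is the ring of `p`-integral rationals and the cast is reduction
modulo `p`. -/
def castableRat (K : Type*) [Field K] : Subring ℚ where
  carrier := {q | (q.den : K) ≠ 0}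
  zero_mem' := by simp
  one_mem' := by simp
  add_mem' {q r} hq hr := ne_zero_of_dvd_ne_zero (by simpa using mul_ne_zero hq hr)
    (Nat.cast_dvd_cast (Rat.add_den_dvd q r))
  mul_mem' {q r} hq hr := ne_zero_of_dvd_ne_zero (by simpa using mul_ne_zero hq hr)
    (Nat.cast_dvd_cast (Rat.mul_den_dvd q r))
  neg_mem' {q} hq := by simpa using hq

variable {K : Type*} [Field K]

lemma inv_natCast_mem_castableRat {n : ℕ} (hn : (n : K) ≠ 0) : (n : ℚ)⁻¹ ∈ castableRat K := by
  have hn0 : n ≠ 0 := by rintro rfl; simp at hn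
  simpa [castableRat, Rat.inv_natCast_den, hn0] using hn

lemma ratCast_sum {ι : Type*} {s : Finset ι} {f : ι → ℚ} (hf : ∀ i ∈ s, f i ∈ castableRat K) :
    ((∑ i ∈ s, f i : ℚ) : K) = ∑ i ∈ s, (f i : K) := by
  classical
  induction s using Finset.induction_on with
  | empty => simp
  | insert a s ha ih =>
    have hs : ∀ i ∈ s, f i ∈ castableRat K := fun i hi => hf i (mem_insert_of_mem hi)
    rw [sum_insert ha, sum_insert ha, ← ih hs,
      Rat.cast_add_of_ne_zero (hf a (mem_insert_self a s)) (sum_mem hs)]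

lemma bernoulli_eq_inv_mul_sub_sum (k : ℕ) :
    bernoulli k = ((k + 1 : ℕ) : ℚ)⁻¹ *
      ((if k = 0 then 1 else 0) - ∑ j ∈ range k, ((k + 1).choose j : ℚ) * bernoulli j) := by
  have hrec := sum_bernoulli (k + 1)
  rw [sum_range_succ, Nat.choose_succ_self_right] at hrec
  simp only [Nat.add_eq_right] at hrec
  rw [← hrec, add_sub_cancel_left, inv_mul_cancel_left₀ (by positivity)]

lemma bernoulli_mem_castableRat {k : ℕ} (hk : ((k + 1).factorial : K) ≠ 0) :
    bernoulli k ∈ castableRat K := by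
  induction k using Nat.strong_induction_on with
  | _ k ih =>
    rw [bernoulli_eq_inv_mul_sub_sum]
    refine mul_mem (inv_natCast_mem_castableRat (natCast_succ_ne_zero_of_factorial hk))
      (sub_mem (by split_ifs <;> simp [zero_mem, one_mem]) (sum_mem fun j hj => ?_))
    have hjk : j < k := mem_range.1 hj
    exact mul_mem (natCast_mem _ _) (ih j hjk (natCast_factorial_ne_zero_of_le (by lia) hk))

lemma sum_range_natCast_pow {e : ℕ} (he : ((e + 1).factorial : K) ≠ 0) (n : ℕ) :
    ∑ i ∈ range n, (i : K) ^ e =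
      ∑ k ∈ range (e + 1),
        (bernoulli k : K) * (e + 1).choose k * n ^ (e + 1 - k) * ((e + 1 : ℕ) : K)⁻¹ := by
  have hB : ∀ k ∈ range (e + 1), bernoulli k ∈ castableRat K := fun k hk =>
    bernoulli_mem_castableRat (natCast_factorial_ne_zero_of_le (by simpa using hk) he)
  have hinv : ((e + 1 : ℕ) : ℚ)⁻¹ ∈ castableRat K :=
    inv_natCast_mem_castableRat (natCast_succ_ne_zero_of_factorial he)
  have hnat (a : ℕ) : (a : ℚ) ∈ castableRat K := natCast_mem _ _
  have hQ := congrArg (Rat.cast : ℚ → K) (sum_range_pow n e)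
  simp only [← Nat.cast_succ, div_eq_mul_inv] at hQ
  rw [ratCast_sum fun i _ => pow_mem (hnat i) e, ratCast_sum fun k hk =>
    mul_mem (mul_mem (mul_mem (hB k hk) (hnat _)) (pow_mem (hnat n) _)) hinv] at hQ
  simp only [Rat.cast_pow, Rat.cast_natCast] at hQ
  rw [hQ]
  refine sum_congr rfl fun k hk => ?_
  rw [Rat.cast_mul_of_ne_zero (mul_mem (mul_mem (hB k hk) (hnat _)) (pow_mem (hnat n) _)) hinv,
    Rat.cast_mul_of_ne_zero (mul_mem (hB k hk) (hnat _)) (pow_mem (hnat n) _),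
    Rat.cast_mul_of_ne_zero (hB k hk) (hnat _)]
  simp only [Rat.cast_pow, Rat.cast_natCast, Rat.cast_inv_nat]

end RatCast

lemma padic_norm_ratCast_le_of_zmod_cast_eq_zero {p : ℕ} [Fact p.Prime] {q : ℚ}
    (hq : q ∈ castableRat (ZMod p)) (h0 : (q : ZMod p) = 0) :
    ‖(q : ℚ_[p])‖ ≤ (p : ℝ) ^ (-1 : ℤ) := by
  have hden : ¬ p ∣ q.den := by rwa [← ZMod.natCast_eq_zero_iff]
  have hnum : (p : ℤ) ∣ q.num := by
    rw [← ZMod.intCast_zmod_eq_zero_iff_dvd]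
    exact (div_eq_zero_iff.1 (Rat.cast_def (K := ZMod p) q ▸ h0)).resolve_right hq
  have hden_norm : ‖(q.den : ℚ_[p])‖ = 1 :=
    Padic.norm_natCast_eq_one_iff.2 ((Nat.Prime.coprime_iff_not_dvd Fact.out).2 hden)
  rw [Rat.cast_def, norm_div, hden_norm, div_one]
  exact_mod_cast (Padic.norm_int_le_pow_iff_dvd q.num 1).2 (by simpa using hnum)

section FiniteField

variable {K : Type*} [Field K] [Fintype K]

lemma sum_eq_sum_units {M : Type*} [AddCommMonoid M] [DecidableEq K] {f : K → M} (hf : f 0 = 0) :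
    ∑ x, f x = ∑ u : Kˣ, f u := by
  rw [← sum_erase univ hf]
  refine (sum_nbij (fun u : Kˣ => (u : K)) ?_ Units.val_injective.injOn ?_ fun _ _ => rfl).symm
  · simp
  · intro x hx
    exact ⟨Units.mk0 x (by simpa using hx), by simp⟩

lemma inv_eq_pow_card_sub_two_of_ne_zero {x : K} (hx : x ≠ 0) :
    x⁻¹ = x ^ (Fintype.card K - 2) := by
  have hcard := Fintype.one_lt_card (α := K)
  refine inv_eq_of_mul_eq_one_right ?_
  rw [← pow_succ', show Fintype.card K - 2 + 1 = Fintype.card K - 1 by lia,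
    FiniteField.pow_card_sub_one_eq_one x hx]

lemma inv_eq_pow_card_sub_two (hK : 2 < Fintype.card K) (x : K) :
    x⁻¹ = x ^ (Fintype.card K - 2) := by
  rcases eq_or_ne x 0 with rfl | hx
  · rw [inv_zero, zero_pow (by lia)]
  · exact inv_eq_pow_card_sub_two_of_ne_zero hx

lemma sum_inv_pow_mul_pow {a b : ℕ} (ha : a ≠ 0) :
    ∑ x : K, x⁻¹ ^ a * x ^ b = if b ≡ a [MOD Fintype.card K - 1] then -1 else 0 := by
  classical
  have hunit (u : Kˣ) : (u : K)⁻¹ ^ a * (u : K) ^ b =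
      (u : K) ^ (b + a * (Fintype.card K - 2)) := by
    rw [inv_eq_pow_card_sub_two_of_ne_zero u.ne_zero, ← pow_mul, ← pow_add, add_comm, mul_comm a]
  have hcard : Fintype.card K - 2 + 1 = Fintype.card K - 1 := by
    have := Fintype.one_lt_card (α := K)
    lia
  have hdvd : Fintype.card K - 1 ∣ b + a * (Fintype.card K - 2) ↔
      b ≡ a [MOD Fintype.card K - 1] := by
    rw [← Nat.modEq_zero_iff_dvd, ← Nat.ModEq.add_iff_right (Nat.ModEq.refl a), zero_add,
      add_assoc, ← Nat.mul_succ, Nat.succ_eq_add_one, hcard]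
    simp [Nat.ModEq]
  rw [sum_eq_sum_units (by simp [ha])]
  simp only [hunit]
  rw [FiniteField.sum_pow_units]
  simp only [hdvd]

lemma sum_inv_mul_sum_inv_mul_inv_sub (hK : ringChar K ≠ 2) :
    ∑ r : K, r⁻¹ * ∑ x : K, x⁻¹ * (r - x)⁻¹ = 0 := by
  have hodd (r : K) : (-r)⁻¹ * ∑ x : K, x⁻¹ * (-r - x)⁻¹ = -(r⁻¹ * ∑ x : K, x⁻¹ * (r - x)⁻¹) := by
    rw [← Equiv.sum_comp (Equiv.neg K) fun x => x⁻¹ * (-r - x)⁻¹]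
    simp only [Equiv.neg_apply, ← neg_sub', inv_neg, neg_mul, mul_neg, neg_neg]
  have hneg := Equiv.sum_comp (Equiv.neg K) fun r => r⁻¹ * ∑ x : K, x⁻¹ * (r - x)⁻¹
  simp only [Equiv.neg_apply, hodd, sum_neg_distrib] at hneg
  exact (Ring.eq_self_iff_eq_zero_of_char_ne_two hK).1 hneg

end FiniteField

section Periodic

variable {n : ℕ} [NeZero n] {M : Type*} [AddCommMonoid M]

lemma sum_range_natCast_zmod (f : ZMod n → M) : ∑ i ∈ range n, f i = ∑ x, f x :=
  sum_nbij' (fun i => i) ZMod.val (by simp) (by simp [ZMod.val_lt])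
    (fun i hi => ZMod.val_cast_of_lt (mem_range.1 hi)) (by simp) (by simp)

lemma sum_range_mul_natCast_zmod (f : ZMod n → M) (a : ℕ) :
    ∑ i ∈ range (a * n), f i = a • ∑ x, f x := by
  induction a with
  | zero => simp
  | succ a ih => simp [Nat.succ_mul, sum_range_add, ih, sum_range_natCast_zmod, succ_nsmul]

end Periodic

section InvConv

/-- The convolution square of `i ↦ i⁻¹`, which is what remains of the triple sum once the last index
is fixed. The terms with `i = 0` or `j = 0` in `K` contribute `0`. -/
def invConv (K : Type*) [Field K] (n : ℕ) : K :=
  ∑ ij ∈ antidiagonal n, (ij.1 : K)⁻¹ * (ij.2 : K)⁻¹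

lemma invConv_eq_sum_range {K : Type*} [Field K] (n : ℕ) :
    invConv K n = ∑ i ∈ range n, (i : K)⁻¹ * ((n : K) - i)⁻¹ := by
  rw [invConv, Nat.sum_antidiagonal_eq_sum_range_succ_mk, sum_range_succ]
  simp only [Nat.sub_self, Nat.cast_zero, inv_zero, mul_zero, add_zero]
  exact sum_congr rfl fun i hi => by rw [Nat.cast_sub (mem_range.1 hi).le]

lemma natCast_mul_invConv {K : Type*} [Field K] {n : ℕ} (hn : ∀ i, 0 < i → i ≤ n → (i : K) ≠ 0) :
    (n : K) * invConv K n = 2 * ∑ i ∈ range n, (i : K)⁻¹ := by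
  have hhalf : ∑ ij ∈ antidiagonal n, (ij.1 : K)⁻¹ * ((ij.2 : K) * (ij.2 : K)⁻¹) =
      ∑ i ∈ range n, (i : K)⁻¹ := by
    rw [Nat.sum_antidiagonal_eq_sum_range_succ_mk, sum_range_succ]
    simp only [Nat.sub_self, Nat.cast_zero, zero_mul, mul_zero, add_zero]
    refine sum_congr rfl fun i hi => ?_
    rw [mul_inv_cancel₀ (hn (n - i) (Nat.sub_pos_of_lt (mem_range.1 hi)) (n.sub_le i)), mul_one]
  calc (n : K) * invConv K n
      = ∑ ij ∈ antidiagonal n, ((ij.1 : K)⁻¹ * ((ij.2 : K) * (ij.2 : K)⁻¹) +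
          (ij.2 : K)⁻¹ * ((ij.1 : K) * (ij.1 : K)⁻¹)) := by
        rw [invConv, mul_sum]
        refine sum_congr rfl fun ij hij => ?_
        rw [← mem_antidiagonal.1 hij]
        push_cast
        ring
    _ = 2 * ∑ i ∈ range n, (i : K)⁻¹ := by
        rw [sum_add_distrib, hhalf, ← hhalf, ← Nat.sum_antidiagonal_swap (n := n)]
        simp only [Prod.fst_swap, Prod.snd_swap]
        ring

variable {p : ℕ} [Fact p.Prime]

lemma zmod_natCast_ne_zero_of_pos_of_lt {n : ℕ} (hn : 0 < n) (hnp : n < p) : (n : ZMod p) ≠ 0 := by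
  rw [Ne, ZMod.natCast_eq_zero_iff]
  exact Nat.not_dvd_of_pos_of_lt hn hnp

lemma inv_mul_invConv_of_lt {n : ℕ} (hn : n < p) :
    (n : ZMod p)⁻¹ * invConv (ZMod p) n =
      2 * ((n : ZMod p)⁻¹ ^ 2 * ∑ i ∈ range n, (i : ZMod p)⁻¹) := by
  rcases Nat.eq_zero_or_pos n with rfl | hpos
  · simp
  · have hn0 : (n : ZMod p) ≠ 0 := zmod_natCast_ne_zero_of_pos_of_lt hpos hn
    have hconv := natCast_mul_invConv (K := ZMod p) (n := n) fun i hi hin =>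
      zmod_natCast_ne_zero_of_pos_of_lt hi (by lia)
    rw [(eq_inv_mul_iff_mul_eq₀ hn0).2 hconv]
    ring

lemma invConv_mul_add (b r : ℕ) :
    invConv (ZMod p) (b * p + r) =
      b * ∑ x : ZMod p, x⁻¹ * ((r : ZMod p) - x)⁻¹ + invConv (ZMod p) r := by
  rw [invConv_eq_sum_range, invConv_eq_sum_range, sum_range_add]
  simp only [Nat.cast_add, Nat.cast_mul, CharP.cast_eq_zero, mul_zero, zero_add]
  rw [sum_range_mul_natCast_zmod fun x => x⁻¹ * ((r : ZMod p) - x)⁻¹, nsmul_eq_mul]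

lemma sum_block_inv_mul_invConv (hp2 : p ≠ 2) (b : ℕ) :
    ∑ r ∈ range p, ((b * p + r : ℕ) : ZMod p)⁻¹ * invConv (ZMod p) (b * p + r) =
      ∑ r ∈ range p, (r : ZMod p)⁻¹ * invConv (ZMod p) r := by
  simp only [invConv_mul_add, mul_add, sum_add_distrib, Nat.cast_add, Nat.cast_mul,
    CharP.cast_eq_zero, mul_zero, zero_add, mul_left_comm _ (b : ZMod p), ← mul_sum]
  rw [sum_range_natCast_zmod fun r : ZMod p => r⁻¹ * ∑ x, x⁻¹ * (r - x)⁻¹,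
    sum_inv_mul_sum_inv_mul_inv_sub (by rwa [ZMod.ringChar_zmod_n]), mul_zero, zero_add]

lemma sum_range_mul_inv_mul_invConv (hp2 : p ≠ 2) (m : ℕ) :
    ∑ n ∈ range (m * p), (n : ZMod p)⁻¹ * invConv (ZMod p) n =
      m * ∑ n ∈ range p, (n : ZMod p)⁻¹ * invConv (ZMod p) n := by
  induction m with
  | zero => simp
  | succ m ih =>
    rw [Nat.succ_mul, sum_range_add, ih, sum_block_inv_mul_invConv hp2]
    push_cast
    ring

end InvConv

section PowerSums

variable {p : ℕ} [Fact p.Prime]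

lemma choose_sub_one_cast_zmod {k : ℕ} (hk : k < p) :
    ((p - 1).choose k : ZMod p) = (-1) ^ k := by
  induction k with
  | zero => simp
  | succ k ih =>
    have hpascal : p.choose (k + 1) = (p - 1).choose k + (p - 1).choose (k + 1) :=
      Nat.choose_eq_choose_pred_add (by lia) k.succ_pos
    have hzero : (p.choose (k + 1) : ZMod p) = 0 :=
      (ZMod.natCast_eq_zero_iff _ _).2
        (Nat.Prime.dvd_choose_self Fact.out k.succ_ne_zero hk)
    rw [hpascal, Nat.cast_add, ih (by lia)] at hzero
    rw [pow_succ]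
    linear_combination hzero

lemma sum_range_inv_natCast_zmod (hp2 : p ≠ 2) (n : ℕ) :
    ∑ i ∈ range n, (i : ZMod p)⁻¹ =
      -∑ k ∈ range (p - 1), (-1) ^ k * (bernoulli k : ZMod p) * (n : ZMod p) ^ (p - 1 - k) := by
  have hp : p.Prime := Fact.out
  have hp3 : 2 < p := hp.two_le.lt_of_ne' hp2
  have he : p - 2 + 1 = p - 1 := by lia
  have hfact : ((p - 2 + 1).factorial : ZMod p) ≠ 0 := by
    rw [Ne, ZMod.natCast_eq_zero_iff, hp.dvd_factorial]
    lia
  have hneg_one : ((p - 1 : ℕ) : ZMod p)⁻¹ = -1 := by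
    rw [Nat.cast_sub hp.one_le]
    simp
  have hfermat (x : ZMod p) : x⁻¹ = x ^ (p - 2) := by
    simpa using inv_eq_pow_card_sub_two (by simpa using hp3) x
  simp only [hfermat (_ : ℕ)]
  rw [sum_range_natCast_pow hfact, he, hneg_one, ← sum_neg_distrib]
  refine sum_congr rfl fun k hk => ?_
  rw [choose_sub_one_cast_zmod (by have := mem_range.1 hk; lia)]
  ring

lemma sum_range_inv_sq_mul_sum_range_inv (hp2 : p ≠ 2) :
    ∑ n ∈ range p, (n : ZMod p)⁻¹ ^ 2 * ∑ i ∈ range n, (i : ZMod p)⁻¹ =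
      (bernoulli (p - 3) : ZMod p) := by
  have hp : p.Prime := Fact.out
  have hp3 : 2 < p := hp.two_le.lt_of_ne' hp2
  have hpower_sum {k : ℕ} (hk : k ∈ range (p - 1)) :
      ∑ x : ZMod p, x⁻¹ ^ 2 * x ^ (p - 1 - k) = if k = p - 3 then -1 else 0 := by
    have hmod : p - 1 - k ≡ 2 [MOD p - 1] ↔ k = p - 3 := by
      have hkp : k < p - 1 := mem_range.1 hk
      refine ⟨fun h => ?_, fun h => by rw [show p - 1 - k = 2 by lia]⟩
      have hdvd : ((p - 1 : ℕ) : ℤ) ∣ 2 - (p - 1 - k : ℕ) := h.dvd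
      have habs : |(2 : ℤ) - (p - 1 - k : ℕ)| < (p - 1 : ℕ) := abs_lt.2 ⟨by lia, by lia⟩
      have hzero := Int.eq_zero_of_abs_lt_dvd hdvd habs
      lia
    rw [sum_inv_pow_mul_pow two_ne_zero, ZMod.card]
    simp only [hmod]
  have heven : Even (p - 3) := by
    have := hp.odd_of_ne_two hp2
    grind
  calc ∑ n ∈ range p, (n : ZMod p)⁻¹ ^ 2 * ∑ i ∈ range n, (i : ZMod p)⁻¹
      = -∑ k ∈ range (p - 1), (-1) ^ k * (bernoulli k : ZMod p) *
          ∑ n ∈ range p, (n : ZMod p)⁻¹ ^ 2 * (n : ZMod p) ^ (p - 1 - k) := by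
        simp only [sum_range_inv_natCast_zmod hp2, mul_neg, sum_neg_distrib, mul_sum]
        rw [sum_comm]
        simp only [mul_left_comm]
    _ = -∑ k ∈ range (p - 1), (-1) ^ k * (bernoulli k : ZMod p) *
          if k = p - 3 then -1 else 0 := by
        congr 1
        refine sum_congr rfl fun k hk => ?_
        rw [sum_range_natCast_zmod fun x : ZMod p => x⁻¹ ^ 2 * x ^ (p - 1 - k), hpower_sum hk]
    _ = (bernoulli (p - 3) : ZMod p) := by
        rw [sum_eq_single_of_mem (p - 3) (by simp; lia) fun k _ hk => by simp [hk]]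
        simp [heven.neg_one_pow]

end PowerSums

section Triples

lemma sum_antidiagonalTuple_three {M : Type*} [AddCommMonoid M] (N : ℕ) (f : ℕ → ℕ → ℕ → M) :
    ∑ l ∈ Nat.antidiagonalTuple 3 N, f (l 0) (l 1) (l 2) =
      ∑ nk ∈ antidiagonal N, ∑ ij ∈ antidiagonal nk.1, f ij.1 ij.2 nk.2 := by
  rw [sum_sigma']
  refine sum_nbij' (fun l => ⟨(l 0 + l 1, l 2), (l 0, l 1)⟩)
    (fun x => ![x.2.1, x.2.2, x.1.2]) ?_ ?_ ?_ ?_ ?_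
  · simp +contextual [Nat.mem_antidiagonalTuple, Fin.sum_univ_three]
  · simp +contextual [Nat.mem_antidiagonalTuple, Fin.sum_univ_three]
  · intro l _
    ext i
    fin_cases i <;> rfl
  · rintro ⟨⟨n, k⟩, ⟨i, j⟩⟩ h
    simp_all
  · simp

/-- Ordered triples of positive integers prime to `p` with sum `N`: the index set of the multiple
harmonic sum. -/
def coprimeTriples (p N : ℕ) : Finset (Fin 3 → ℕ) :=
  (Fintype.piFinset fun _ : Fin 3 => Ioo 0 N).filter
    fun l => l 0 + l 1 + l 2 = N ∧ ∀ i, ¬ p ∣ l i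

variable {p : ℕ} [Fact p.Prime]

lemma sum_coprimeTriples_eq_sum_antidiagonalTuple (N : ℕ) :
    ∑ l ∈ coprimeTriples p N, (l 0 : ZMod p)⁻¹ * (l 1 : ZMod p)⁻¹ * (l 2 : ZMod p)⁻¹ =
      ∑ l ∈ Nat.antidiagonalTuple 3 N,
        (l 0 : ZMod p)⁻¹ * (l 1 : ZMod p)⁻¹ * (l 2 : ZMod p)⁻¹ := by
  refine sum_subset (fun l hl => ?_) fun l hl hcop => ?_
  · simpa [coprimeTriples, Nat.mem_antidiagonalTuple, Fin.sum_univ_three] using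
      (mem_filter.1 hl).2.1
  · have hsum : l 0 + l 1 + l 2 = N := by
      simpa [Nat.mem_antidiagonalTuple, Fin.sum_univ_three] using hl
    obtain ⟨i, hi⟩ : ∃ i, p ∣ l i := by
      by_contra! hndvd
      have hpos (i) : 0 < l i := Nat.pos_of_ne_zero fun h => hndvd i (h ▸ dvd_zero p)
      have := hpos 0
      have := hpos 1
      have := hpos 2
      refine hcop (mem_filter.2 ⟨Fintype.mem_piFinset.2 fun i => ?_, hsum, hndvd⟩)
      fin_cases i <;> simp <;> lia
    have hzero : (l i : ZMod p) = 0 := (ZMod.natCast_eq_zero_iff _ _).2 hi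
    fin_cases i <;> simp_all

lemma sum_antidiagonalTuple_inv_eq_neg_sum_invConv (m : ℕ) :
    ∑ l ∈ Nat.antidiagonalTuple 3 (m * p),
        (l 0 : ZMod p)⁻¹ * (l 1 : ZMod p)⁻¹ * (l 2 : ZMod p)⁻¹ =
      -∑ n ∈ range (m * p), (n : ZMod p)⁻¹ * invConv (ZMod p) n := by
  rw [sum_antidiagonalTuple_three _ fun i j k =>
    (i : ZMod p)⁻¹ * (j : ZMod p)⁻¹ * (k : ZMod p)⁻¹]
  simp only [← sum_mul]
  change ∑ nk ∈ antidiagonal (m * p), invConv (ZMod p) nk.1 * (nk.2 : ZMod p)⁻¹ = _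
  rw [Nat.sum_antidiagonal_eq_sum_range_succ_mk, sum_range_succ, ← sum_neg_distrib]
  simp only [Nat.sub_self, Nat.cast_zero, inv_zero, mul_zero, add_zero]
  refine sum_congr rfl fun n hn => ?_
  rw [Nat.cast_sub (mem_range.1 hn).le, Nat.cast_mul, CharP.cast_eq_zero (ZMod p) p, mul_zero,
    zero_sub, inv_neg]
  ring

lemma sum_coprimeTriples_mul (hp2 : p ≠ 2) (m : ℕ) :
    ∑ l ∈ coprimeTriples p (m * p), (l 0 : ZMod p)⁻¹ * (l 1 : ZMod p)⁻¹ * (l 2 : ZMod p)⁻¹ =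
      -(2 * m * (bernoulli (p - 3) : ZMod p)) := by
  have hblock : ∑ n ∈ range p, (n : ZMod p)⁻¹ * invConv (ZMod p) n =
      2 * (bernoulli (p - 3) : ZMod p) := by
    rw [← sum_range_inv_sq_mul_sum_range_inv hp2, mul_sum]
    exact sum_congr rfl fun n hn => inv_mul_invConv_of_lt (mem_range.1 hn)
  rw [sum_coprimeTriples_eq_sum_antidiagonalTuple, sum_antidiagonalTuple_inv_eq_neg_sum_invConv,
    sum_range_mul_inv_mul_invConv hp2, hblock]
  ring

lemma inv_mem_castableRat_of_mem_coprimeTriples {N : ℕ} {l : Fin 3 → ℕ}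
    (hl : l ∈ coprimeTriples p N) (i : Fin 3) : (l i : ℚ)⁻¹ ∈ castableRat (ZMod p) :=
  inv_natCast_mem_castableRat <| by
    rw [Ne, ZMod.natCast_eq_zero_iff]
    exact (mem_filter.1 hl).2.2 i

lemma bernoulli_mem_castableRat_zmod {k : ℕ} (hk : k + 1 < p) :
    bernoulli k ∈ castableRat (ZMod p) :=
  bernoulli_mem_castableRat <| by
    rw [Ne, ZMod.natCast_eq_zero_iff, Nat.Prime.dvd_factorial Fact.out]
    lia

lemma sum_coprimeTriples_mem_castableRat (N : ℕ) :
    ∑ l ∈ coprimeTriples p N, (1 : ℚ) / (l 0 * l 1 * l 2) ∈ castableRat (ZMod p) := by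
  refine sum_mem fun l hl => ?_
  have hinv := inv_mem_castableRat_of_mem_coprimeTriples hl
  simpa only [one_div, mul_inv] using mul_mem (mul_mem (hinv 0) (hinv 1)) (hinv 2)

lemma ratCast_sum_coprimeTriples (N : ℕ) :
    ((∑ l ∈ coprimeTriples p N, (1 : ℚ) / (l 0 * l 1 * l 2) : ℚ) : ZMod p) =
      ∑ l ∈ coprimeTriples p N, (l 0 : ZMod p)⁻¹ * (l 1 : ZMod p)⁻¹ * (l 2 : ZMod p)⁻¹ := by
  have hinv {l} (hl : l ∈ coprimeTriples p N) := inv_mem_castableRat_of_mem_coprimeTriples hl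
  simp only [one_div, mul_inv]
  rw [ratCast_sum fun l hl => mul_mem (mul_mem (hinv hl 0) (hinv hl 1)) (hinv hl 2)]
  refine sum_congr rfl fun l hl => ?_
  rw [Rat.cast_mul_of_ne_zero (mul_mem (hinv hl 0) (hinv hl 1)) (hinv hl 2),
    Rat.cast_mul_of_ne_zero (hinv hl 0) (hinv hl 1)]
  simp only [Rat.cast_inv_nat]

end Triples

theorem stmt_12_general (p m : ℕ) [Fact p.Prime] (hp2 : p ≠ 2) :
    ‖((((∑ l ∈ (Fintype.piFinset fun _ : Fin 3 => Finset.Ioo 0 (m * p)).filter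
            (fun l : Fin 3 → ℕ => l 0 + l 1 + l 2 = m * p ∧ ∀ i, ¬ p ∣ l i),
          (1 : ℚ) / (l 0 * l 1 * l 2)) + 2 * m * bernoulli (p - 3)) : ℚ) : ℚ_[p])‖
      ≤ (p : ℝ) ^ (-1 : ℤ) := by
  have hS := sum_coprimeTriples_mem_castableRat (p := p) (m * p)
  have hB : bernoulli (p - 3) ∈ castableRat (ZMod p) := by
    have := Nat.Prime.two_le (p := p) Fact.out
    exact bernoulli_mem_castableRat_zmod (by lia)
  have h2m : ((2 * m : ℕ) : ℚ) ∈ castableRat (ZMod p) := natCast_mem _ _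
  have h2mB := mul_mem h2m hB
  push_cast at h2m h2mB
  refine padic_norm_ratCast_le_of_zmod_cast_eq_zero (add_mem hS h2mB) ?_
  change ((∑ l ∈ coprimeTriples p (m * p), (1 : ℚ) / (l 0 * l 1 * l 2) +
    2 * m * bernoulli (p - 3) : ℚ) : ZMod p) = 0
  rw [Rat.cast_add_of_ne_zero hS h2mB, ratCast_sum_coprimeTriples, sum_coprimeTriples_mul hp2,
    Rat.cast_mul_of_ne_zero h2m hB]
  have hcast : ((2 * m : ℚ) : ZMod p) = 2 * m := by exact_mod_cast Rat.cast_natCast (2 * m)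
  rw [hcast, neg_add_cancel]

theorem stmt_12 (p m : ℕ) [hp : Fact p.Prime] (hp5 : 5 ≤ p) (hm : 0 < m)
    (hpm : ¬ p ∣ m) :
    ‖((((∑ l ∈ (Fintype.piFinset fun _ : Fin 3 => Finset.Ioo 0 (m * p)).filter
            (fun l : Fin 3 → ℕ => l 0 + l 1 + l 2 = m * p ∧ ∀ i, ¬ p ∣ l i),
          (1 : ℚ) / (l 0 * l 1 * l 2)) + 2 * m * bernoulli (p - 3)) : ℚ) : ℚ_[p])‖
      ≤ (p : ℝ) ^ (-1 : ℤ) :=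
  stmt_12_general p m (by lia)
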